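/- arXiv:math/0312232 — 3 statements merged into one kernel-verified Lean document; each statement's English description precedes it below -/
import Mathlib

section
/- Let G be a finite group acting transitively on a nonempty finite set X such that the algebra of G-equivariant linear endomorphisms of ℂ^X is commutative. For a function ξ : X × X → ℂ satisfying ξ(g·x, g·y) = ξ(x, y) for all g ∈ G and x, y ∈ X, the following are equivalent: (a) there exists an irreducible complex character χ of G with P_χ ≠ 0 and ξ = ξ_{X,χ}; (b) ξ(x₀, x₀) = 1 for every x₀ ∈ X, and for all x₀, x₁, x₂ ∈ X one has (1/|G_{x₀}|) · Σ_{g ∈ G_{x₀}} ξ(g·x₁, x₂) = ξ(x₁, x₀) · ξ(x₀, x₂). -/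
open Finset

/-!
Let `e` be the average of an irreducible representation `V` over the stabilizer `G_{x₀}`. Taking
traces, `ξ_{X,χ}(a • x₀, b • x₀) = tr (e ∘ ρ (a⁻¹ b))`. By Frobenius reciprocity a functional on
the range of `e` amounts to an intertwining map `V → ℂ^X`; since the commutant of `ℂ^X` is
commutative, these maps form a space of dimension at most one. So `e` has rank one as soon as it
is nonzero, `e = φ(·) v` with `φ v = 1`, and `ξ_{X,χ}(a • x₀, b • x₀) = φ (ρ (a⁻¹ b) v)`, from
which the functional equation is immediate. Conversely, the functional equation says that on the
span `W` of the translates of `ξ(·, x₀)` the average is `w ↦ w(x₀) ξ(·, x₀)`. A nonzero invariant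
subspace of `W` contains some `w` with `w(x₀) ≠ 0`, hence `ξ(·, x₀)`, hence all of `W`: so `W` is
irreducible, and the trace formula identifies `ξ` with its spherical function.
-/

section Irreducibility

open CategoryTheory Representation

universe u v

variable {k : Type u} [Field k] {G : Type v} [Monoid G]

theorem isIrreducible_of_forall_eq_top {V : Type*} [AddCommGroup V] [Module k V] [Nontrivial V]
    {ρ : Representation k G V} (h : ∀ U : Subrepresentation ρ, ∀ u ∈ U, u ≠ 0 → U = ⊤) :
    ρ.IsIrreducible where
  exists_pair_ne := by
    obtain ⟨v, hv⟩ := exists_ne (0 : V)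
    refine ⟨⊥, ⊤, fun hbot => hv ?_⟩
    have hmem : v ∈ (⊤ : Subrepresentation ρ) := Submodule.mem_top
    rwa [← hbot] at hmem
  eq_bot_or_eq_top U := by
    refine or_iff_not_imp_left.2 fun hU => ?_
    obtain ⟨u, hu, hu0⟩ := Submodule.exists_mem_ne_zero_of_ne_bot
      fun hbot => hU (Subrepresentation.toSubmodule_injective hbot)
    exact h U u hu hu0

theorem isIrreducible_of_simple (V : FDRep k G) [Simple V] : IsIrreducible (G := G) V.ρ := by
  have : Nontrivial V := by
    by_contra! hV
    exact id_nonzero V (by ext v; exact Subsingleton.elim _ _)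
  refine isIrreducible_of_forall_eq_top fun U u hu hu0 => eq_top_iff.2 fun v _ => ?_
  let ι : FDRep.of U.toRepresentation ⟶ V :=
    ⟨FGModuleCat.ofHom U.toSubmodule.subtype, fun _ => rfl⟩
  have : Mono ι := ConcreteCategory.mono_of_injective _ Subtype.val_injective
  have hι : ι ≠ 0 := fun h => hu0 congr($(h).hom.hom.hom (⟨u, hu⟩ : U.toSubmodule))
  have := isIso_of_mono_of_nonzero hι
  have hv : (((inv ι).hom.hom.hom v : U.toSubmodule) : V) = v :=
    congr($(IsIso.inv_hom_id ι).hom.hom.hom v)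
  exact hv ▸ Subtype.property _

theorem simple_of_isIrreducible {V : Type u} [AddCommGroup V] [Module k V] [FiniteDimensional k V]
    (ρ : Representation k G V) [ρ.IsIrreducible] : Simple (FDRep.of ρ) where
  mono_isIso_iff_nonzero {W} f _ := by
    constructor
    · rintro _ rfl
      have : Nontrivial V := IsSimpleModule.nontrivial (MonoidAlgebra k G) ρ.asModule
      obtain ⟨v, hv⟩ := exists_ne (0 : V)
      have hid : 𝟙 (FDRep.of ρ) = 0 := by simpa using (IsIso.inv_hom_id (0 : W ⟶ FDRep.of ρ)).symm
      exact hv congr($(hid).hom.hom.hom v)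
    · intro hf
      let F : IntertwiningMap (G := G) W.ρ ρ :=
        ⟨f.hom.hom.hom, fun g => congr($(f.comm g).hom.hom)⟩
      have hF : F ≠ 0 := fun h => hf (by ext v; exact congr($h v))
      have hsurj : Function.Surjective f :=
        (IsIrreducible.surjective_or_eq_zero F).resolve_right hF
      have : Epi f := ConcreteCategory.epi_of_surjective _ hsurj
      exact isIso_of_mono_of_epi f

end Irreducibility

section OrbitSpan

open Representation

variable {k G V : Type*} [Field k] [Monoid G] [AddCommGroup V] [Module k V]

/-- The subrepresentation generated by a vector `v`, i.e. the span of its orbit. -/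
def orbitSpan (ρ : Representation k G V) (v : V) : Subrepresentation ρ where
  toSubmodule := Submodule.span k (Set.range fun g => ρ g v)
  apply_mem_toSubmodule g u hu := by
    refine Submodule.span_le (p := (Submodule.span k _).comap (ρ g)) |>.2 ?_ hu
    rintro _ ⟨h, rfl⟩
    exact Submodule.subset_span ⟨g * h, by simp⟩

variable {ρ : Representation k G V}

theorem mem_orbitSpan_self (v : V) : v ∈ orbitSpan ρ v :=
  Submodule.subset_span ⟨1, by simp⟩

theorem orbitSpan_le_iff_mem {v : V} {U : Subrepresentation ρ} : orbitSpan ρ v ≤ U ↔ v ∈ U := by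
  refine ⟨fun h => h (mem_orbitSpan_self v), fun hv => Submodule.span_le.2 ?_⟩
  rintro _ ⟨g, rfl⟩
  exact U.apply_mem_toSubmodule g hv

theorem isIrreducible_orbitSpan {v : V} (hv : v ≠ 0)
    (h : ∀ u ∈ orbitSpan ρ v, u ≠ 0 → v ∈ orbitSpan ρ u) :
    (orbitSpan ρ v).toRepresentation.IsIrreducible := by
  have : Nontrivial (orbitSpan ρ v).toSubmodule :=
    ⟨⟨v, mem_orbitSpan_self v⟩, 0, by simpa [Subtype.ext_iff] using hv⟩
  refine isIrreducible_of_forall_eq_top fun U u huU hu => eq_top_iff.2 fun w _ => ?_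
  let U' : Subrepresentation ρ :=
    { toSubmodule := U.toSubmodule.map (orbitSpan ρ v).toSubmodule.subtype
      apply_mem_toSubmodule := by
        rintro g _ ⟨u, hu, rfl⟩
        exact ⟨_, U.apply_mem_toSubmodule g hu, rfl⟩ }
  have huU' : u.1 ∈ U' := ⟨u, huU, rfl⟩
  have hvU' : v ∈ U' := orbitSpan_le_iff_mem.2 huU' (h u u.2 (by simpa using hu))
  obtain ⟨w', hw', hww'⟩ := orbitSpan_le_iff_mem.2 hvU' w.2
  rwa [← Subtype.ext hww']

end OrbitSpan

section MultiplicityFree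

open Representation

variable {k G V W : Type*} [Field k] [Group G] [Finite G] [NeZero (Nat.card G : k)]
  [AddCommGroup V] [Module k V] [AddCommGroup W] [Module k W]
  {ρ : Representation k G V} {π : Representation k G W}

theorem exists_comp_eq_id_of_injective {A : IntertwiningMap ρ π} (hA : Function.Injective A) :
    ∃ P : IntertwiningMap π ρ, P.comp A = .id ρ := by
  obtain ⟨P, hP⟩ := MonoidAlgebra.exists_leftInverse_of_injective
    (IntertwiningMap.equivLinearMapAsModule ρ π A) (LinearMap.ker_eq_bot.2 hA)
  refine ⟨(IntertwiningMap.equivLinearMapAsModule π ρ).symm P, ?_⟩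
  ext v
  exact congr($hP v)

-- If `P ∘ A = 1` and `P ∘ B = c`, then `A ∘ P` and `B ∘ P` commute only if `B = c • A`.
theorem exists_eq_smul_of_commute [IsAlgClosed k] [FiniteDimensional k V] [ρ.IsIrreducible]
    (hπ : ∀ S T : IntertwiningMap π π, S * T = T * S)
    {A : IntertwiningMap ρ π} (hA : A ≠ 0) (B : IntertwiningMap ρ π) : ∃ c : k, B = c • A := by
  obtain ⟨P, hP⟩ :=
    exists_comp_eq_id_of_injective ((IsIrreducible.injective_or_eq_zero A).resolve_right hA)
  obtain ⟨c, hc⟩ :=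
    IsIrreducible.algebraMap_intertwiningMap_bijective_of_isAlgClosed.2 (P.comp B)
  have hPA (v : V) : P (A v) = v := congr($hP v)
  have hPB (v : V) : P (B v) = c • v := congr($hc.symm v)
  refine ⟨c, ?_⟩
  ext v
  simpa [hPA, hPB] using congr($(hπ (B.comp P) (A.comp P)) (A v))

end MultiplicityFree

section CharacterDegree

open Representation

variable {k G V : Type*} [Field k] [IsAlgClosed k] [Group G] [Finite G]
  [NeZero (Nat.card G : k)] [AddCommGroup V] [Module k V] [FiniteDimensional k V]
  {ρ : Representation k G V} [ρ.IsIrreducible]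

-- `∑ g, χ g⁻¹ • ρ g` is a scalar by Schur's lemma, and its trace is `|G|` by orthonormality.
theorem character_one_ne_zero : ρ.character 1 ≠ 0 := by
  have := Fintype.ofFinite G
  have := invertibleOfNonzero (NeZero.ne (Nat.card G : k))
  let T : IntertwiningMap ρ ρ :=
    { toLinearMap := ∑ g, ρ.character g⁻¹ • ρ g
      isIntertwining' := fun a => by
        rw [← Module.End.mul_eq_comp, ← Module.End.mul_eq_comp, sum_mul, mul_sum]
        refine Fintype.sum_equiv (MulAut.conj a⁻¹).toEquiv _ _ fun g => ?_
        have hconj : ρ.character (a⁻¹ * (g⁻¹ * a)) = ρ.character g⁻¹ := by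
          simpa [mul_assoc] using ρ.char_conj g⁻¹ a⁻¹
        simp [hconj, ← map_mul, mul_assoc] }
  obtain ⟨c, hc⟩ := IsIrreducible.algebraMap_intertwiningMap_bijective_of_isAlgClosed.2 T
  have hT : ∑ g, ρ.character g⁻¹ • ρ g = c • ρ 1 := by
    rw [map_one]
    exact congr(($hc.symm).toLinearMap)
  have htrace : ∑ g, ρ.character g * ρ.character g⁻¹ = c * ρ.character 1 := by
    simpa [character, mul_comm] using congr(LinearMap.trace k V $hT)
  have horth := char_orthonormal ρ ρ
  rw [htrace, if_pos ⟨.refl ρ⟩] at horth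
  intro h
  simp [h] at horth

end CharacterDegree

section FibreSums

open MulAction

variable {G X M : Type*} [Group G] [Fintype G] [MulAction G X] [DecidableEq X] [AddCommMonoid M]

theorem sum_filter_smul_smul_eq (x₀ : X) (a b : G) (F : G → M) :
    ∑ g with g • b • x₀ = a • x₀, F g = ∑ h : G with h • x₀ = x₀, F (a * h * b⁻¹) := by
  refine (sum_equiv ((Equiv.mulLeft a).trans (Equiv.mulRight b⁻¹)) ?_ ?_).symm <;> simp [mul_smul]

theorem sum_filter_smul_eq_self_inv (x₀ : X) (F : G → M) :
    ∑ h : G with h • x₀ = x₀, F h⁻¹ = ∑ h : G with h • x₀ = x₀, F h :=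
  sum_equiv (Equiv.inv G) (fun h => by simp [inv_smul_eq_iff, eq_comm (a := h • x₀)]) (by simp)

theorem card_filter_smul_eq_self (x₀ : X) :
    #{h : G | h • x₀ = x₀} = Nat.card (stabilizer G x₀) := by
  simp [Nat.card_eq_fintype_card, Fintype.card_subtype, mem_stabilizer_iff]

theorem card_filter_smul_eq_self_ne_zero {k : Type*} [Field k] [NeZero (Nat.card G : k)] (x₀ : X) :
    (#{h : G | h • x₀ = x₀} : k) ≠ 0 := by
  have h := NeZero.ne (Nat.card G : k)
  rw [← (stabilizer G x₀).card_mul_index, Nat.cast_mul] at h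
  rw [card_filter_smul_eq_self]
  exact left_ne_zero_of_mul h

theorem card_div_card_eq_inv_card_filter [Fintype X] [IsPretransitive G X] {k : Type*} [Field k]
    [NeZero (Nat.card G : k)] (x₀ : X) :
    (Fintype.card X : k) / Fintype.card G = (#{h : G | h • x₀ = x₀} : k)⁻¹ := by
  have hG := NeZero.ne (Nat.card G : k)
  have hstab := card_filter_smul_eq_self_ne_zero (G := G) (k := k) x₀
  rw [← Nat.card_eq_fintype_card, ← Nat.card_eq_fintype_card, div_eq_iff hG,
    eq_inv_mul_iff_mul_eq₀ hstab, card_filter_smul_eq_self, ← index_stabilizer_of_transitive G x₀,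
    ← Nat.cast_mul, Subgroup.card_mul_index]

end FibreSums

section StabilizerAverage

open MulAction Representation

variable {k G X V : Type*} [Field k] [Group G] [Fintype G] [MulAction G X] [DecidableEq X]
  [AddCommGroup V] [Module k V]

/-- The average of a representation over the stabilizer of `x₀`: the projection onto the
vectors fixed by that stabilizer. It is `0` if the order of the stabilizer is `0` in `k`. -/
def stabilizerAverage (ρ : Representation k G V) (x₀ : X) : V →ₗ[k] V :=
  (#{h : G | h • x₀ = x₀} : k)⁻¹ • ∑ h : G with h • x₀ = x₀, ρ h

theorem stabilizerAverage_apply (ρ : Representation k G V) (x₀ : X) (v : V) :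
    stabilizerAverage ρ x₀ v =
      (#{h : G | h • x₀ = x₀} : k)⁻¹ • ∑ h : G with h • x₀ = x₀, ρ h v := by
  simp [stabilizerAverage]

theorem stabilizerAverage_mem {ρ : Representation k G V} (x₀ : X) {U : Subrepresentation ρ} {u : V}
    (hu : u ∈ U) : stabilizerAverage ρ x₀ u ∈ U := by
  rw [stabilizerAverage_apply]
  exact U.toSubmodule.smul_mem _ (sum_mem fun h _ => U.apply_mem_toSubmodule h hu)

theorem coe_stabilizerAverage_toRepresentation {ρ : Representation k G V} (x₀ : X)
    (U : Subrepresentation ρ) (u : U.toSubmodule) :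
    (stabilizerAverage U.toRepresentation x₀ u : V) = stabilizerAverage ρ x₀ u := by
  simp [stabilizerAverage_apply, Subrepresentation.toRepresentation]

variable [NeZero (Nat.card G : k)]

theorem stabilizerAverage_stabilizerAverage (ρ : Representation k G V) (x₀ : X) (v : V) :
    stabilizerAverage ρ x₀ (stabilizerAverage ρ x₀ v) = stabilizerAverage ρ x₀ v := by
  let σ := ρ.comp (stabilizer G x₀).subtype
  have hcard : (Fintype.card (stabilizer G x₀) : k) ≠ 0 := by
    rw [← Nat.card_eq_fintype_card, ← card_filter_smul_eq_self]
    exact card_filter_smul_eq_self_ne_zero x₀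
  let _ := invertibleOfNonzero hcard
  have hsum : ∑ h : G with h • x₀ = x₀, ρ h = ∑ h : stabilizer G x₀, σ h :=
    sum_subtype _ (by simp) _
  have haverage : stabilizerAverage ρ x₀ = averageMap σ := by
    rw [stabilizerAverage, hsum, card_filter_smul_eq_self, Nat.card_eq_fintype_card]
    simp [GroupAlgebra.average]
  rw [haverage]
  exact averageMap_id σ _ (averageMap_invariant σ v)

end StabilizerAverage

section PermutationRepresentation

open MulAction Representation

variable (k G X : Type*) [Field k] [Group G] [MulAction G X]

/-- The permutation representation of `G` on all functions `X → k`, by left translation.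
(`Representation.ofMulAction` acts on finitely supported functions instead.) -/
def permutationRep : Representation k G (X → k) where
  toFun g := LinearMap.funLeft k k (g⁻¹ • · : X → X)
  map_one' := by ext; simp
  map_mul' g h := by ext; simp [mul_smul, LinearMap.funLeft]

variable {k G X}

@[simp]
theorem permutationRep_apply (g : G) (ψ : X → k) (x : X) :
    permutationRep k G X g ψ x = ψ (g⁻¹ • x) :=
  rfl

variable {V : Type*} [AddCommGroup V] [Module k V] [Fintype G] [DecidableEq X]

/-- The intertwining map attached to a functional `f` by Frobenius reciprocity, its value at `x`
being the sum of the matrix coefficients `f (ρ g⁻¹ v)` over the `g` with `g • x₀ = x`. -/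
def orbitCoefficient (ρ : Representation k G V) (x₀ : X) (f : Module.Dual k V) :
    IntertwiningMap ρ (permutationRep k G X) where
  toLinearMap := LinearMap.pi fun x => ∑ g : G with g • x₀ = x, f ∘ₗ ρ g⁻¹
  isIntertwining' a := by
    ext v x
    simp only [LinearMap.comp_apply, LinearMap.pi_apply, LinearMap.sum_apply, permutationRep_apply]
    exact sum_equiv (Equiv.mulLeft a⁻¹) (by simp [mul_smul]) (by simp)

theorem orbitCoefficient_apply_self [NeZero (Nat.card G : k)] (ρ : Representation k G V) (x₀ : X)
    (f : Module.Dual k V) (v : V) :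
    orbitCoefficient ρ x₀ f v x₀ = #{h : G | h • x₀ = x₀} * f (stabilizerAverage ρ x₀ v) := by
  have h : orbitCoefficient ρ x₀ f v x₀ = ∑ h : G with h • x₀ = x₀, f (ρ h⁻¹ v) := by
    simp [orbitCoefficient, ← IntertwiningMap.toLinearMap_apply]
  rw [h, sum_filter_smul_eq_self_inv x₀ fun h => f (ρ h v), stabilizerAverage_apply, map_smul,
    map_sum, smul_eq_mul, mul_inv_cancel_left₀ (card_filter_smul_eq_self_ne_zero x₀)]

theorem exists_stabilizerAverage_eq_smulRight [NeZero (Nat.card G : k)] [IsAlgClosed k]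
    [FiniteDimensional k V] {ρ : Representation k G V} [ρ.IsIrreducible] {x₀ : X}
    (hcomm : ∀ S T : IntertwiningMap (permutationRep k G X) (permutationRep k G X), S * T = T * S)
    (hρ : stabilizerAverage ρ x₀ ≠ 0) :
    ∃ (φ : Module.Dual k V) (v : V), φ v = 1 ∧ stabilizerAverage ρ x₀ = φ.smulRight v := by
  obtain ⟨u, hu⟩ := DFunLike.ne_iff.1 hρ
  obtain ⟨f, hf⟩ := Module.Projective.exists_dual_eq_one k hu
  have hcard := card_filter_smul_eq_self_ne_zero (G := G) (k := k) x₀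
  have hne : orbitCoefficient ρ x₀ f ≠ 0 := fun h => hcard <| by
    simpa [hf] using (orbitCoefficient_apply_self ρ x₀ f u).symm.trans congr($h u x₀)
  refine ⟨f ∘ₗ stabilizerAverage ρ x₀, stabilizerAverage ρ x₀ u, ?_, ?_⟩
  · simpa [stabilizerAverage_stabilizerAverage] using hf
  refine LinearMap.ext fun w => Module.eval_apply_injective k (LinearMap.ext fun f' => ?_)
  obtain ⟨c, hc⟩ := exists_eq_smul_of_commute hcomm hne (orbitCoefficient ρ x₀ f')
  have hf' (w : V) : f' (stabilizerAverage ρ x₀ w) = c * f (stabilizerAverage ρ x₀ w) := by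
    refine mul_left_cancel₀ hcard ?_
    rw [mul_left_comm, ← orbitCoefficient_apply_self, ← orbitCoefficient_apply_self]
    exact congr($hc w x₀)
  simp [hf', hf, mul_comm]

end PermutationRepresentation

section SphericalFunction

open MulAction Representation

variable {k G X V : Type*} [Field k] [Group G] [Fintype G] [Fintype X] [MulAction G X]
  [DecidableEq X] [AddCommGroup V] [Module k V]

/-- The spherical function `ξ_{X,χ}` of the `G`-set `X`, where `χ` is the character of `ρ`:
for irreducible `ρ`, `|X| / χ(1)` times the matrix of the projection `P_χ` onto the
`χ`-isotypic component. -/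
noncomputable def sphericalFunction (ρ : Representation k G V) (x y : X) : k :=
  (Fintype.card X : k) / Fintype.card G * ∑ g : G with g • y = x, ρ.character g⁻¹

theorem sum_sphericalFunction_mul (ρ : Representation k G V) (ψ : X → k) (x : X) :
    ∑ y, sphericalFunction ρ x y * ψ y =
      (Fintype.card X : k) / Fintype.card G * ∑ g : G, ρ.character g⁻¹ * ψ (g⁻¹ • x) := by
  simp only [sphericalFunction, mul_assoc, ← mul_sum]
  congr 1
  rw [← sum_fiberwise univ fun g : G => g⁻¹ • x]
  refine sum_congr rfl fun y _ => ?_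
  simp only [inv_smul_eq_iff, eq_comm (a := x), sum_mul]
  refine sum_congr rfl fun g hg => ?_
  rw [← (mem_filter.1 hg).2, inv_smul_smul]

variable [IsPretransitive G X] [NeZero (Nat.card G : k)]

theorem sphericalFunction_smul_smul (ρ : Representation k G V) (x₀ : X) (a b : G) :
    sphericalFunction ρ (a • x₀) (b • x₀) =
      LinearMap.trace k V (stabilizerAverage ρ x₀ ∘ₗ ρ (a⁻¹ * b)) := by
  rw [sphericalFunction, card_div_card_eq_inv_card_filter x₀, sum_filter_smul_smul_eq,
    ← sum_filter_smul_eq_self_inv, stabilizerAverage, ← Module.End.mul_eq_comp, smul_mul_assoc,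
    map_smul, smul_eq_mul, sum_mul, map_sum]
  congr 1
  refine sum_congr rfl fun h _ => ?_
  calc ρ.character (a * h⁻¹ * b⁻¹)⁻¹ = ρ.character (b * (h * a⁻¹)) := by group
    _ = ρ.character (h * a⁻¹ * b) := ρ.char_mul_comm _ _
    _ = LinearMap.trace k V (ρ h * ρ (a⁻¹ * b)) := by
      rw [character, mul_assoc, map_mul]

theorem stabilizerAverage_ne_zero {ρ : Representation k G V}
    (hρ : sphericalFunction (X := X) ρ ≠ 0) (x₀ : X) : stabilizerAverage ρ x₀ ≠ 0 := by
  contrapose! hρ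
  ext x y
  obtain ⟨a, rfl⟩ := exists_smul_eq G x₀ x
  obtain ⟨b, rfl⟩ := exists_smul_eq G x₀ y
  rw [sphericalFunction_smul_smul, hρ, LinearMap.zero_comp, map_zero, Pi.zero_apply, Pi.zero_apply]

variable [FiniteDimensional k V]

theorem sphericalFunction_smul_smul_of_eq_smulRight {ρ : Representation k G V} {x₀ : X}
    {φ : Module.Dual k V} {v : V} (h : stabilizerAverage ρ x₀ = φ.smulRight v) (a b : G) :
    sphericalFunction ρ (a • x₀) (b • x₀) = φ (ρ (a⁻¹ * b) v) := by
  have hcomp : φ.smulRight v ∘ₗ ρ (a⁻¹ * b) = (φ ∘ₗ ρ (a⁻¹ * b)).smulRight v := rfl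
  rw [sphericalFunction_smul_smul, h, hcomp, LinearMap.trace_smulRight, LinearMap.comp_apply]

variable [IsAlgClosed k] {ρ : Representation k G V} [ρ.IsIrreducible]

theorem sphericalFunction_self
    (hcomm : ∀ S T : IntertwiningMap (permutationRep k G X) (permutationRep k G X), S * T = T * S)
    (hρ : sphericalFunction (X := X) ρ ≠ 0) (x₀ : X) : sphericalFunction ρ x₀ x₀ = 1 := by
  obtain ⟨φ, v, hφv, hφ⟩ :=
    exists_stabilizerAverage_eq_smulRight hcomm (stabilizerAverage_ne_zero hρ x₀)
  simpa [hφv] using sphericalFunction_smul_smul_of_eq_smulRight hφ 1 1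

theorem inv_card_mul_sum_sphericalFunction_smul
    (hcomm : ∀ S T : IntertwiningMap (permutationRep k G X) (permutationRep k G X), S * T = T * S)
    (hρ : sphericalFunction (X := X) ρ ≠ 0) (x₀ x₁ x₂ : X) :
    (#{h : G | h • x₀ = x₀} : k)⁻¹ * ∑ h : G with h • x₀ = x₀, sphericalFunction ρ (h • x₁) x₂ =
      sphericalFunction ρ x₁ x₀ * sphericalFunction ρ x₀ x₂ := by
  obtain ⟨φ, v, -, hφ⟩ :=
    exists_stabilizerAverage_eq_smulRight hcomm (stabilizerAverage_ne_zero hρ x₀)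
  have hξ := sphericalFunction_smul_smul_of_eq_smulRight hφ
  obtain ⟨a, rfl⟩ := exists_smul_eq G x₀ x₁
  obtain ⟨b, rfl⟩ := exists_smul_eq G x₀ x₂
  have hsum : ∑ h : G with h • x₀ = x₀, sphericalFunction ρ (h • a • x₀) (b • x₀) =
      ∑ h : G with h • x₀ = x₀, φ (ρ a⁻¹ (ρ h (ρ b v))) := by
    rw [← sum_filter_smul_eq_self_inv]
    simp [smul_smul, hξ, mul_assoc]
  have ha : sphericalFunction ρ (a • x₀) x₀ = φ (ρ a⁻¹ v) := by simpa using hξ a 1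
  have hb : sphericalFunction ρ x₀ (b • x₀) = φ (ρ b v) := by simpa using hξ 1 b
  calc _ = φ (ρ a⁻¹ (stabilizerAverage ρ x₀ (ρ b v))) := by
        simp only [hsum, stabilizerAverage_apply, map_smul, map_sum, smul_eq_mul]
    _ = sphericalFunction ρ (a • x₀) x₀ * sphericalFunction ρ x₀ (b • x₀) := by
        rw [hφ, LinearMap.smulRight_apply, map_smul, map_smul, smul_eq_mul, ha, hb, mul_comm]

theorem exists_projection_ne_zero_iff :
    (∃ (ψ : X → k) (x : X),
      ρ.character 1 / Fintype.card G * ∑ g : G, ρ.character g⁻¹ * ψ (g⁻¹ • x) ≠ 0) ↔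
      sphericalFunction (X := X) ρ ≠ 0 := by
  have hX (x : X) : (Fintype.card X : k) / Fintype.card G ≠ 0 := by
    rw [card_div_card_eq_inv_card_filter x]
    exact inv_ne_zero (card_filter_smul_eq_self_ne_zero x)
  have hdim : ρ.character 1 / Fintype.card G ≠ 0 :=
    div_ne_zero character_one_ne_zero (Nat.card_eq_fintype_card (α := G) ▸ NeZero.ne _)
  refine ⟨fun ⟨ψ, x, hψ⟩ hξ => ?_, fun hξ => ?_⟩
  · have hzero := sum_sphericalFunction_mul ρ ψ x
    simp only [hξ, Pi.zero_apply, zero_mul, sum_const_zero] at hzero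
    rw [(mul_eq_zero.1 hzero.symm).resolve_left (hX x), mul_zero] at hψ
    exact hψ rfl
  · obtain ⟨x, y, hxy⟩ : ∃ x y, sphericalFunction ρ x y ≠ 0 := by
      simpa [funext_iff] using hξ
    refine ⟨Pi.single y 1, x, mul_ne_zero hdim fun h => hxy ?_⟩
    have hzero := sum_sphericalFunction_mul ρ (Pi.single y 1) x
    rw [h, mul_zero] at hzero
    simpa [Pi.single_apply] using hzero

end SphericalFunction

section SphericalKernel

open MulAction Representation

variable {k G X : Type*} [Field k] [Group G] [MulAction G X] {ξ : X → X → k}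

theorem permutationRep_kernel_apply (hinv : ∀ (g : G) (x y : X), ξ (g • x) (g • y) = ξ x y)
    (g : G) (y : X) : permutationRep k G X g (ξ · y) = (ξ · (g • y)) := by
  ext x
  simpa using (hinv g (g⁻¹ • x) y).symm

variable [Fintype G] [DecidableEq X]

theorem stabilizerAverage_eq_smul_of_mem_orbitSpan
    (hinv : ∀ (g : G) (x y : X), ξ (g • x) (g • y) = ξ x y) {x₀ : X}
    (hmul : ∀ x₁ x₂, (#{h : G | h • x₀ = x₀} : k)⁻¹ * ∑ h : G with h • x₀ = x₀, ξ (h • x₁) x₂ =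
      ξ x₁ x₀ * ξ x₀ x₂) {w : X → k} (hw : w ∈ orbitSpan (permutationRep k G X) (ξ · x₀)) :
    stabilizerAverage (permutationRep k G X) x₀ w = w x₀ • (ξ · x₀) := by
  induction hw using Submodule.span_induction with
  | mem w hw =>
    obtain ⟨g, rfl⟩ := hw
    ext x
    simp only [permutationRep_kernel_apply hinv]
    rw [stabilizerAverage_apply, Pi.smul_apply, Pi.smul_apply, smul_eq_mul, smul_eq_mul,
      mul_comm (ξ x₀ _), ← hmul,
      ← sum_filter_smul_eq_self_inv x₀ fun h : G => ξ (h • x) (g • x₀)]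
    simp
  | zero => simp
  | add w w' _ _ h h' => rw [map_add, h, h', Pi.add_apply, add_smul]
  | smul c w _ h => rw [map_smul, h, Pi.smul_apply, smul_assoc]

variable [IsPretransitive G X]

theorem isIrreducible_orbitSpan_kernel
    (hinv : ∀ (g : G) (x y : X), ξ (g • x) (g • y) = ξ x y) {x₀ : X} (hone : ξ x₀ x₀ = 1)
    (hmul : ∀ x₁ x₂, (#{h : G | h • x₀ = x₀} : k)⁻¹ * ∑ h : G with h • x₀ = x₀, ξ (h • x₁) x₂ =
      ξ x₁ x₀ * ξ x₀ x₂) :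
    (orbitSpan (permutationRep k G X) (ξ · x₀)).toRepresentation.IsIrreducible := by
  refine isIrreducible_orbitSpan (fun h => by simpa [hone] using congrFun h x₀) fun u hu hu0 => ?_
  obtain ⟨x, hx⟩ := Function.ne_iff.1 hu0
  obtain ⟨a, rfl⟩ := exists_smul_eq G x₀ x
  have haverage := stabilizerAverage_mem x₀ <|
    (orbitSpan (permutationRep k G X) u).apply_mem_toSubmodule a⁻¹ (mem_orbitSpan_self u)
  rw [stabilizerAverage_eq_smul_of_mem_orbitSpan hinv hmul
    (Subrepresentation.apply_mem_toSubmodule _ a⁻¹ hu), permutationRep_apply, inv_inv] at haverage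
  exact (Submodule.smul_mem_iff _ hx).1 haverage

theorem sphericalFunction_orbitSpan_kernel [Fintype X] [NeZero (Nat.card G : k)]
    (hinv : ∀ (g : G) (x y : X), ξ (g • x) (g • y) = ξ x y) {x₀ : X}
    (hmul : ∀ x₁ x₂, (#{h : G | h • x₀ = x₀} : k)⁻¹ * ∑ h : G with h • x₀ = x₀, ξ (h • x₁) x₂ =
      ξ x₁ x₀ * ξ x₀ x₂) :
    sphericalFunction (orbitSpan (permutationRep k G X) (ξ · x₀)).toRepresentation = ξ := by
  set W := orbitSpan (permutationRep k G X) (ξ · x₀)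
  have haverage : stabilizerAverage W.toRepresentation x₀ =
      (LinearMap.proj x₀ ∘ₗ W.toSubmodule.subtype).smulRight ⟨_, mem_orbitSpan_self _⟩ := by
    ext1 w
    exact Subtype.ext <| (coe_stabilizerAverage_toRepresentation x₀ W w).trans
      (stabilizerAverage_eq_smul_of_mem_orbitSpan hinv hmul w.2)
  ext x y
  obtain ⟨a, rfl⟩ := exists_smul_eq G x₀ x
  obtain ⟨b, rfl⟩ := exists_smul_eq G x₀ y
  calc sphericalFunction W.toRepresentation (a • x₀) (b • x₀)
    _ = permutationRep k G X (a⁻¹ * b) (ξ · x₀) x₀ :=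
      sphericalFunction_smul_smul_of_eq_smulRight haverage a b
    _ = ξ x₀ ((a⁻¹ * b) • x₀) := by rw [permutationRep_kernel_apply hinv]
    _ = ξ (a • x₀) (b • x₀) := by
      rw [← hinv a x₀, smul_smul, mul_inv_cancel_left]

end SphericalKernel

open Representation in
theorem stmt_0_general.{u, v} {k X : Type u} {G : Type v} [Field k] [IsAlgClosed k] [Group G]
    [Fintype G] [NeZero (Nat.card G : k)] [Fintype X] [Nonempty X] [MulAction G X] [DecidableEq X]
    (htrans : MulAction.IsPretransitive G X)
    (hcomm : ∀ T S : (X → k) →ₗ[k] (X → k),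
      (∀ (g : G) (ψ : X → k), T (fun x => ψ (g⁻¹ • x)) = fun x => T ψ (g⁻¹ • x)) →
      (∀ (g : G) (ψ : X → k), S (fun x => ψ (g⁻¹ • x)) = fun x => S ψ (g⁻¹ • x)) →
      T ∘ₗ S = S ∘ₗ T)
    (ξ : X × X → k)
    (hinv : ∀ (g : G) (x y : X), ξ (g • x, g • y) = ξ (x, y)) :
    (∃ V : FDRep k G, CategoryTheory.Simple V ∧
      (∃ (ψ : X → k) (x : X),
        (V.character 1 / (Fintype.card G : k)) *
          ∑ g : G, V.character g⁻¹ * ψ (g⁻¹ • x) ≠ 0) ∧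
      ∀ x y : X, ξ (x, y) =
        ((Fintype.card X : k) / (Fintype.card G : k)) *
          ∑ g ∈ univ.filter (fun g : G => g • y = x), V.character g⁻¹)
    ↔
    ((∀ x₀ : X, ξ (x₀, x₀) = 1) ∧
      ∀ x₀ x₁ x₂ : X,
        (1 / ((univ.filter (fun g : G => g • x₀ = x₀)).card : k)) *
            ∑ g ∈ univ.filter (fun g : G => g • x₀ = x₀), ξ (g • x₁, x₂) =
          ξ (x₁, x₀) * ξ (x₀, x₂)) := by
  have hcomm' (S T : IntertwiningMap (permutationRep k G X) (permutationRep k G X)) :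
      S * T = T * S :=
    IntertwiningMap.toLinearMap_injective _ _ <| hcomm S.toLinearMap T.toLinearMap
      (fun g ψ => congr($(S.isIntertwining' g) ψ)) fun g ψ => congr($(T.isIntertwining' g) ψ)
  simp only [one_div]
  constructor
  · rintro ⟨V, hV, hP, hξ⟩
    have := isIrreducible_of_simple V
    have hne := exists_projection_ne_zero_iff.1 hP
    have hξ' (x y : X) : ξ (x, y) = sphericalFunction (G := G) V.ρ x y := hξ x y
    simp only [hξ']
    exact ⟨sphericalFunction_self hcomm' hne, inv_card_mul_sum_sphericalFunction_smul hcomm' hne⟩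
  · rintro ⟨hone, hmul⟩
    let x₀ : X := Classical.arbitrary X
    have := isIrreducible_orbitSpan_kernel (ξ := fun x y => ξ (x, y)) hinv (hone x₀) (hmul x₀)
    have hξ := sphericalFunction_orbitSpan_kernel (ξ := fun x y => ξ (x, y)) hinv (hmul x₀)
    let W := orbitSpan (permutationRep k G X) fun x => ξ (x, x₀)
    refine ⟨FDRep.of W.toRepresentation, simple_of_isIrreducible _,
      exists_projection_ne_zero_iff (ρ := W.toRepresentation).2 fun h => ?_,
      fun x y => congr($hξ.symm x y)⟩
    exact one_ne_zero (α := k) <| (hone x₀).symm.trans congr($(hξ.symm.trans h) x₀ x₀)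

/-- Characterization of spherical functions on a finite symmetric space (Theorem 1).
`G` is a finite group acting transitively on a nonempty finite set `X`, such that the
algebra of `G`-equivariant endomorphisms of `ℂ^X` is commutative.  For a `G`-invariant
`ξ : X × X → ℂ`, the following are equivalent: (a) there is an irreducible representation
`V` of `G` (with character `χ`) such that the projection
`P_χ = (χ(1)/|G|) Σ_g χ(g⁻¹) ρ(g)` is nonzero and
`ξ(x,y) = (|X|/|G|) Σ_{g • y = x} χ(g⁻¹)`; (b) `ξ(x₀,x₀) = 1` for all `x₀`, and
`(1/|G_{x₀}|) Σ_{g ∈ G_{x₀}} ξ(g•x₁, x₂) = ξ(x₁,x₀) ξ(x₀,x₂)` for all `x₀, x₁, x₂`. -/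
theorem stmt_0 {G X : Type} [Group G] [Fintype G] [Fintype X] [Nonempty X]
    [MulAction G X] [DecidableEq X]
    (htrans : MulAction.IsPretransitive G X)
    (hcomm : ∀ T S : (X → ℂ) →ₗ[ℂ] (X → ℂ),
      (∀ (g : G) (ψ : X → ℂ), T (fun x => ψ (g⁻¹ • x)) = fun x => T ψ (g⁻¹ • x)) →
      (∀ (g : G) (ψ : X → ℂ), S (fun x => ψ (g⁻¹ • x)) = fun x => S ψ (g⁻¹ • x)) →
      T ∘ₗ S = S ∘ₗ T)
    (ξ : X × X → ℂ)
    (hinv : ∀ (g : G) (x y : X), ξ (g • x, g • y) = ξ (x, y)) :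
    (∃ V : FDRep ℂ G, CategoryTheory.Simple V ∧
      (∃ (ψ : X → ℂ) (x : X),
        (V.character 1 / (Fintype.card G : ℂ)) *
          ∑ g : G, V.character g⁻¹ * ψ (g⁻¹ • x) ≠ 0) ∧
      ∀ x y : X, ξ (x, y) =
        ((Fintype.card X : ℂ) / (Fintype.card G : ℂ)) *
          ∑ g ∈ Finset.univ.filter (fun g : G => g • y = x), V.character g⁻¹)
    ↔
    ((∀ x₀ : X, ξ (x₀, x₀) = 1) ∧
      ∀ x₀ x₁ x₂ : X,
        (1 / ((Finset.univ.filter (fun g : G => g • x₀ = x₀)).card : ℂ)) *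
            ∑ g ∈ Finset.univ.filter (fun g : G => g • x₀ = x₀), ξ (g • x₁, x₂) =
          ξ (x₁, x₀) * ξ (x₀, x₂)) := by
  exact stmt_0_general htrans hcomm ξ hinv
end

section
/- Let G be a finite group acting on a finite set X such that the action is symmetric, i.e. for all x, x' ∈ X there exists g ∈ G with g·x = x' and g·x' = x. Then the algebra of linear endomorphisms of ℂ^X that commute with the permutation action of G (i.e. all T with T ∘ ρ(g) = ρ(g) ∘ T for every g ∈ G, where (ρ(g)ψ)(x) = ψ(g⁻¹·x)) is commutative. -/
/-!
This is Gelfand's trick. The matrix `A` of an endomorphism commuting with the permutation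
representation is constant on the orbits of `G` on `X × X`. A symmetric action puts `(x, y)` and
`(y, x)` in one orbit, so `A` is a symmetric matrix. If `B` is the matrix of another such
endomorphism, then `A * B` is symmetric as well, and `A * B = (A * B)ᵀ = Bᵀ * Aᵀ = B * A`.
-/

open LinearMap (toMatrix')

section SymmetricMatrices

variable {n α : Type*}

theorem isSymm_of_forall_exists_smul_swap {G : Type*} [SMul G n] {A : Matrix n n α}
    (hswap : ∀ i j : n, ∃ g : G, g • i = j ∧ g • j = i)
    (hA : ∀ (g : G) (i j : n), A (g • i) (g • j) = A i j) : A.IsSymm := by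
  refine Matrix.IsSymm.ext fun i j ↦ ?_
  obtain ⟨g, hij, hji⟩ := hswap i j
  simpa only [hij, hji] using hA g i j

theorem commute_iff_isSymm_mul [Fintype n] [NonUnitalCommSemiring α] {A B : Matrix n n α}
    (hA : A.IsSymm) (hB : B.IsSymm) : Commute A B ↔ (A * B).IsSymm := by
  rw [Matrix.IsSymm, Matrix.transpose_mul, hA.eq, hB.eq, commute_iff_eq, eq_comm]

end SymmetricMatrices

section EquivariantEndomorphisms

variable {R G X : Type*} [CommSemiring R] [Group G] [MulAction G X]

theorem toMatrix'_apply_perm_perm [Fintype X] [DecidableEq X] {T : (X → R) →ₗ[R] (X → R)}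
    (σ : Equiv.Perm X) (hT : ∀ ψ : X → R, T (ψ ∘ σ) = T ψ ∘ σ) (x y : X) :
    toMatrix' T (σ x) (σ y) = toMatrix' T x y := by
  have single_comp : Pi.single (σ y) (1 : R) ∘ σ = Pi.single y 1 := by
    simpa only [Equiv.symm_apply_apply] using Pi.single_comp_equiv σ (σ y) (1 : R)
  calc toMatrix' T (σ x) (σ y)
      = (T (Pi.single (σ y) 1) ∘ σ) x := LinearMap.toMatrix'_apply ..
    _ = T (Pi.single y 1) x := by rw [← hT, single_comp]
    _ = toMatrix' T x y := (LinearMap.toMatrix'_apply ..).symm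

theorem isSymm_toMatrix'_of_equivariant [Fintype X] [DecidableEq X]
    (hsym : ∀ x x' : X, ∃ g : G, g • x = x' ∧ g • x' = x) {T : (X → R) →ₗ[R] (X → R)}
    (hT : ∀ (g : G) (ψ : X → R), T (fun x ↦ ψ (g⁻¹ • x)) = fun x ↦ T ψ (g⁻¹ • x)) :
    (toMatrix' T).IsSymm := by
  refine isSymm_of_forall_exists_smul_swap hsym fun g ↦ ?_
  refine toMatrix'_apply_perm_perm (MulAction.toPerm g) fun ψ ↦ ?_
  simpa only [inv_inv, Function.comp_def, MulAction.toPerm_apply] using hT g⁻¹ ψ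

theorem stmt_1_general [Finite X]
    (hsym : ∀ x x' : X, ∃ g : G, g • x = x' ∧ g • x' = x)
    (T S : (X → R) →ₗ[R] (X → R))
    (hT : ∀ (g : G) (ψ : X → R), T (fun x ↦ ψ (g⁻¹ • x)) = fun x ↦ T ψ (g⁻¹ • x))
    (hS : ∀ (g : G) (ψ : X → R), S (fun x ↦ ψ (g⁻¹ • x)) = fun x ↦ S ψ (g⁻¹ • x)) :
    T ∘ₗ S = S ∘ₗ T := by
  classical
  cases nonempty_fintype X
  have hTS (g : G) (ψ : X → R) :
      (T ∘ₗ S) (fun x ↦ ψ (g⁻¹ • x)) = fun x ↦ (T ∘ₗ S) ψ (g⁻¹ • x) := by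
    simp only [LinearMap.comp_apply, hS, hT]
  have commute_matrices : Commute (toMatrix' T) (toMatrix' S) := by
    rw [commute_iff_isSymm_mul (isSymm_toMatrix'_of_equivariant hsym hT)
      (isSymm_toMatrix'_of_equivariant hsym hS), ← LinearMap.toMatrix'_comp]
    exact isSymm_toMatrix'_of_equivariant hsym hTS
  apply LinearMap.toMatrix'.injective
  rw [LinearMap.toMatrix'_comp, LinearMap.toMatrix'_comp, commute_matrices.eq]

end EquivariantEndomorphisms

/-- If a finite group `G` acts symmetrically on a finite set `X` (for all `x, x'` there is
`g` with `g•x = x'` and `g•x' = x`), then the algebra of linear endomorphisms of `ℂ^X`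
commuting with the permutation representation `ρ`, `(ρ(g)ψ)(x) = ψ(g⁻¹•x)`, is
commutative. -/
theorem stmt_1 {G X : Type*} [Group G] [Fintype G] [Fintype X] [MulAction G X]
    (hsym : ∀ x x' : X, ∃ g : G, g • x = x' ∧ g • x' = x)
    (T S : (X → ℂ) →ₗ[ℂ] (X → ℂ))
    (hT : ∀ (g : G) (ψ : X → ℂ), T (fun x => ψ (g⁻¹ • x)) = fun x => T ψ (g⁻¹ • x))
    (hS : ∀ (g : G) (ψ : X → ℂ), S (fun x => ψ (g⁻¹ • x)) = fun x => S ψ (g⁻¹ • x)) :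
    T ∘ₗ S = S ∘ₗ T :=
  stmt_1_general hsym T S hT hS
end

section
/- Let Ω be a finite set with |Ω| = n and let 0 ≤ r1, r2 ≤ n. The complex vector space of linear maps T : (X_{r1} → ℂ) → (X_{r2} → ℂ) that commute with the permutation action of the symmetric group S(Ω) (i.e. T ∘ ρ_{r1}(g) = ρ_{r2}(g) ∘ T for all permutations g of Ω) has dimension min(r1, n − r1, r2, n − r2) + 1. -/
/-- The action of a permutation `g` of `Ω` on `r`-element subsets, by taking images. -/
def permAct {Ω : Type*} [DecidableEq Ω] (g : Equiv.Perm Ω) {r : ℕ}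
    (x : {x : Finset Ω // x.card = r}) : {x : Finset Ω // x.card = r} :=
  ⟨x.1.image g, by rw [Finset.card_image_of_injective _ g.injective]; exact x.2⟩

/-- The permutation representation `ρ_r` of `S(Ω)` on functions `X_r → ℂ`:
`(ρ_r(g)ψ)(x) = ψ(g⁻¹(x))`. -/
def rho {Ω : Type*} [DecidableEq Ω] (g : Equiv.Perm Ω) {r : ℕ}
    (ψ : {x : Finset Ω // x.card = r} → ℂ) : {x : Finset Ω // x.card = r} → ℂ :=
  fun x => ψ (permAct g⁻¹ x)

/-- The space of linear maps `(X_{r1} → ℂ) → (X_{r2} → ℂ)` intertwining the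
permutation representations of `S(Ω)`. -/
noncomputable def IntSp (Ω : Type*) [Fintype Ω] [DecidableEq Ω] (r1 r2 : ℕ) :
    Submodule ℂ
      (({x : Finset Ω // x.card = r1} → ℂ) →ₗ[ℂ] ({x : Finset Ω // x.card = r2} → ℂ)) where
  carrier := {T | ∀ (g : Equiv.Perm Ω) (ψ), T (rho g ψ) = rho g (T ψ)}
  add_mem' := by
    intro a b ha hb g ψ
    funext x
    simp [LinearMap.add_apply, ha g ψ, hb g ψ, rho]
  zero_mem' := by
    intro g ψ
    funext x
    simp [rho]
  smul_mem' := by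
    intro c a ha g ψ
    funext x
    simp [LinearMap.smul_apply, ha g ψ, rho]

/-!
A linear map `(X → R) → (Y → R)` is the same as a kernel `Y × X → R`, and it commutes with the
action of a group `G` on the finite sets `X` and `Y` exactly when its kernel is constant on the
`G`-orbits of `Y × X`. Hence the space of intertwining maps is free of rank the number of these
orbits. When `G` is the symmetric group on `n` points and `X`, `Y` consist of the subsets of sizes
`r1` and `r2`, the orbit of a pair of subsets is determined by the size of the intersection, which
takes all values between `max 0 (r1 + r2 - n)` and `min r1 r2`.
-/

open Finset MulAction Representation
open scoped Pointwise

section FunctionRep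

variable (R G : Type*) [CommRing R] [Group G]

/-- The permutation representation of `G` on the `R`-valued functions on a `G`-set `X`,
`(g • ψ) x = ψ (g⁻¹ • x)`. All functions are allowed, whereas `Representation.ofMulAction` acts on
finitely supported ones. -/
def functionRep (X : Type*) [MulAction G X] : Representation R G (X → R) where
  toFun g := LinearMap.funLeft R R (g⁻¹ • ·)
  map_one' := by ext; simp [LinearMap.funLeft_apply]
  map_mul' g h := by ext; simp [LinearMap.funLeft_apply, mul_smul]

variable {X Y : Type*} [MulAction G X] [MulAction G Y]

variable {R G} in
@[simp]
theorem functionRep_apply (g : G) (ψ : X → R) (x : X) :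
    functionRep R G X g ψ x = ψ (g⁻¹ • x) :=
  rfl

variable {R G} in
theorem functionRep_single [DecidableEq X] (g : G) (x : X) (c : R) :
    functionRep R G X g (Pi.single x c) = Pi.single (g • x) c := by
  ext y
  simp only [functionRep_apply, Pi.single_apply, inv_smul_eq_iff]

variable (X) in
theorem invariants_functionRep :
    (functionRep R G X).invariants =
      LinearMap.range (LinearMap.funLeft R R (Quotient.mk (orbitRel G X))) := by
  ext ψ
  rw [mem_invariants, LinearMap.mem_range]
  constructor
  · intro hψ
    have constant_on_orbits (x y : X) (hxy : orbitRel G X x y) : ψ x = ψ y := by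
      obtain ⟨g, rfl⟩ := hxy
      simpa using (congrFun (hψ g) (g • y)).symm
    exact ⟨Quotient.lift ψ constant_on_orbits, rfl⟩
  · rintro ⟨φ, rfl⟩ g
    ext x
    exact congrArg φ (Quotient.sound ⟨g⁻¹, rfl⟩)

variable (X) in
theorem finrank_invariants_functionRep [Nontrivial R] [Finite (orbitRel.Quotient G X)] :
    Module.finrank R (functionRep R G X).invariants = Nat.card (orbitRel.Quotient G X) := by
  have := Fintype.ofFinite (orbitRel.Quotient G X)
  rw [invariants_functionRep, LinearMap.finrank_range_of_inj
    (LinearMap.funLeft_injective_of_surjective R R _ Quotient.mk_surjective)]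
  exact (Module.finrank_fintype_fun_eq_card R).trans Nat.card_eq_fintype_card.symm

section Kernel

variable [Fintype X] [DecidableEq X]

variable (X Y) in
/-- The kernel of a linear map `T : (X → R) → (Y → R)`, that is its matrix in the bases of point
masses, as a function on `Y × X`. -/
def kernelEquiv : ((X → R) →ₗ[R] (Y → R)) ≃ₗ[R] (Y × X → R) :=
  LinearMap.toMatrix' ≪≫ₗ (LinearEquiv.curry R R Y X).symm

variable {R}

theorem kernelEquiv_apply (T : (X → R) →ₗ[R] (Y → R)) (p : Y × X) :
    kernelEquiv R X Y T p = T (Pi.single p.2 1) p.1 :=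
  rfl

variable {G} in
theorem kernelEquiv_linHom (g : G) (T : (X → R) →ₗ[R] (Y → R)) :
    kernelEquiv R X Y (linHom (functionRep R G X) (functionRep R G Y) g T) =
      functionRep R G (Y × X) g (kernelEquiv R X Y T) := by
  ext p
  simp [kernelEquiv_apply, functionRep_single]

theorem map_kernelEquiv_invariants_linHom :
    (linHom (functionRep R G X) (functionRep R G Y)).invariants.map
      (kernelEquiv R X Y : ((X → R) →ₗ[R] (Y → R)) →ₗ[R] (Y × X → R)) =
        (functionRep R G (Y × X)).invariants := by
  ext K
  obtain ⟨T, rfl⟩ := (kernelEquiv R X Y).surjective K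
  simp only [Submodule.mem_map_equiv, LinearEquiv.symm_apply_apply, mem_invariants,
    ← kernelEquiv_linHom, EmbeddingLike.apply_eq_iff_eq]

end Kernel

variable (X Y) in
theorem finrank_intertwiningMap_functionRep [Nontrivial R] [Finite X]
    [Finite (orbitRel.Quotient G (Y × X))] :
    Module.finrank R (IntertwiningMap (functionRep R G X) (functionRep R G Y)) =
      Nat.card (orbitRel.Quotient G (Y × X)) := by
  classical
  have := Fintype.ofFinite X
  rw [← (invariantsEquivIntertwiningMap _ _).finrank_eq,
    ← LinearEquiv.finrank_map_eq (kernelEquiv R X Y), map_kernelEquiv_invariants_linHom,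
    finrank_invariants_functionRep]

end FunctionRep

section PairsOfSubsets

variable {α : Type*} [DecidableEq α] [Finite α]

theorem natCard_mem_mem_eq {s t s' t' : Finset α} (hs : #s = #s') (ht : #t = #t')
    (hst : #(s ∩ t) = #(s' ∩ t')) (c : Prop × Prop) :
    Nat.card {a // (a ∈ s, a ∈ t) = c} = Nat.card {a // (a ∈ s', a ∈ t') = c} := by
  have := Fintype.ofFinite α
  have h_sdiff : #(s \ t) = #(s' \ t') := by
    rw [card_sdiff, card_sdiff, inter_comm t, inter_comm t', hs, hst]
  have h_sdiff_swap : #(t \ s) = #(t' \ s') := by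
    rw [card_sdiff, card_sdiff, ht, hst]
  have h_compl : #(s ∪ t)ᶜ = #(s' ∪ t')ᶜ := by
    rw [card_compl, card_compl, card_union, card_union, hs, ht, hst]
  obtain ⟨p, q⟩ := c
  by_cases hp : p <;> by_cases hq : q
  · rwa [Nat.subtype_card (s ∩ t) (by simp [hp, hq]),
      Nat.subtype_card (s' ∩ t') (by simp [hp, hq])]
  · rwa [Nat.subtype_card (s \ t) (by simp [hp, hq]),
      Nat.subtype_card (s' \ t') (by simp [hp, hq])]
  · rwa [Nat.subtype_card (t \ s) (by simp [hp, hq, and_comm]),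
      Nat.subtype_card (t' \ s') (by simp [hp, hq, and_comm])]
  · rwa [Nat.subtype_card (s ∪ t)ᶜ (by simp [hp, hq]),
      Nat.subtype_card (s' ∪ t')ᶜ (by simp [hp, hq])]

theorem exists_perm_smul_eq_and_smul_eq_iff {s t s' t' : Finset α} :
    (∃ g : Equiv.Perm α, g • s = s' ∧ g • t = t') ↔
      #s = #s' ∧ #t = #t' ∧ #(s ∩ t) = #(s' ∩ t') := by
  constructor
  · rintro ⟨g, rfl, rfl⟩
    simp only [← smul_finset_inter, card_smul_finset, and_self]
  · rintro ⟨hs, ht, hst⟩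
    let e (c : Prop × Prop) :
        {a // (a ∈ s, a ∈ t) = c} ≃ {a // (a ∈ s', a ∈ t') = c} :=
      (Finite.card_eq.mp (natCard_mem_mem_eq hs ht hst c)).some
    let g : Equiv.Perm α := Equiv.ofFiberEquiv e
    have hg (a : α) : (g a ∈ s', g a ∈ t') = (a ∈ s, a ∈ t) := Equiv.ofFiberEquiv_map e a
    refine ⟨g, ?_, ?_⟩
    · ext a
      simpa [← inv_smul_mem_iff] using (congrArg Prod.fst (hg (g⁻¹ a))).symm
    · ext a
      simpa [← inv_smul_mem_iff] using (congrArg Prod.snd (hg (g⁻¹ a))).symm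

theorem exists_card_eq_card_inter_eq_iff {r s k : ℕ} :
    (∃ x y : Finset α, #x = r ∧ #y = s ∧ #(x ∩ y) = k) ↔
      r + s ≤ Nat.card α + k ∧ k ≤ r ∧ k ≤ s := by
  have := Fintype.ofFinite α
  rw [Nat.card_eq_fintype_card]
  constructor
  · rintro ⟨x, y, rfl, rfl, rfl⟩
    refine ⟨?_, card_le_card inter_subset_left, card_le_card inter_subset_right⟩
    rw [← card_union_add_card_inter]
    gcongr
    exact card_le_univ _
  · rintro ⟨hrs, hkr, hks⟩
    obtain ⟨y, -, hy⟩ := exists_subset_card_eq (s := (univ : Finset α)) (n := s)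
      (by rw [card_univ]; lia)
    obtain ⟨u, huy, hu⟩ := exists_subset_card_eq (s := y) (n := k) (by lia)
    obtain ⟨v, hvy, hv⟩ := exists_subset_card_eq (s := yᶜ) (n := r - k) (by rw [card_compl]; lia)
    have hdisj : Disjoint v y := subset_compl_iff_disjoint_right.mp hvy
    refine ⟨u ∪ v, y, ?_, hy, ?_⟩
    · rw [card_union_of_disjoint (hdisj.symm.mono_left huy)]
      lia
    · rw [union_inter_distrib_right, disjoint_iff_inter_eq_empty.mp hdisj, union_empty,
        inter_eq_left.mpr huy, hu]

variable (α) in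
/-- The size of the intersection of a pair of subsets of prescribed cardinalities: the complete
invariant of such pairs under permutations. -/
def interCard (r s : ℕ) (p : Set.powersetCard α r × Set.powersetCard α s) : ℕ :=
  #((p.1 : Finset α) ∩ p.2)

variable (α) in
theorem orbitRel_perm_eq_ker_interCard (r s : ℕ) :
    orbitRel (Equiv.Perm α) (Set.powersetCard α r × Set.powersetCard α s) =
      Setoid.ker (interCard α r s) := by
  ext p q
  have smul_eq_iff (g : Equiv.Perm α) :
      g • q = p ↔ g • (q.1 : Finset α) = p.1 ∧ g • (q.2 : Finset α) = p.2 := by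
    simp only [Prod.ext_iff, Prod.smul_fst, Prod.smul_snd, Subtype.ext_iff,
      Set.powersetCard.coe_smul]
  simp only [orbitRel_apply, mem_orbit_iff, smul_eq_iff, exists_perm_smul_eq_and_smul_eq_iff,
    Set.powersetCard.card_eq, true_and, Setoid.ker_def, interCard]
  exact eq_comm

variable (α) in
theorem range_interCard (r s : ℕ) :
    Set.range (interCard α r s) = Set.Icc (r + s - Nat.card α) (min r s) := by
  ext k
  have mem_range_iff : k ∈ Set.range (interCard α r s) ↔
      ∃ x y : Finset α, #x = r ∧ #y = s ∧ #(x ∩ y) = k :=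
    ⟨fun ⟨⟨x, y⟩, h⟩ ↦ ⟨x, y, x.2, y.2, h⟩, fun ⟨x, y, hx, hy, h⟩ ↦ ⟨⟨⟨x, hx⟩, ⟨y, hy⟩⟩, h⟩⟩
  rw [mem_range_iff, exists_card_eq_card_inter_eq_iff, Set.mem_Icc, le_min_iff, tsub_le_iff_left]

variable (α) in
theorem natCard_orbitRel_quotient_perm (r s : ℕ) :
    Nat.card (orbitRel.Quotient (Equiv.Perm α) (Set.powersetCard α r × Set.powersetCard α s)) =
      min r s + 1 - (r + s - Nat.card α) := by
  rw [orbitRel.Quotient, orbitRel_perm_eq_ker_interCard,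
    Nat.card_congr (Setoid.quotientKerEquivRange _), range_interCard,
    Nat.card_coe_set_eq, ← coe_Icc, Set.ncard_coe_finset, Nat.card_Icc]

end PairsOfSubsets

theorem stmt_3_general (R : Type*) [CommRing R] [Nontrivial R] {Ω : Type*} [Finite Ω]
    [DecidableEq Ω] (n r1 r2 : ℕ) (hn : Nat.card Ω = n) (h1 : r1 ≤ n) (h2 : r2 ≤ n) :
    Module.finrank R (IntertwiningMap (functionRep R (Equiv.Perm Ω) (Set.powersetCard Ω r1))
      (functionRep R (Equiv.Perm Ω) (Set.powersetCard Ω r2))) =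
        min (min r1 (n - r1)) (min r2 (n - r2)) + 1 := by
  rw [finrank_intertwiningMap_functionRep, natCard_orbitRel_quotient_perm, hn]
  lia

/-- The space `IntSp Ω r1 r2` as a space of `IntertwiningMap`s. The types `{x // x.card = r}` and
`Set.powersetCard Ω r` are definitionally equal, and so are `rho` and the action of `functionRep`,
so a map is sent to itself. -/
def intSpEquivIntertwiningMap (Ω : Type*) [Fintype Ω] [DecidableEq Ω] (r1 r2 : ℕ) :
    IntSp Ω r1 r2 ≃ₗ[ℂ]
      IntertwiningMap (functionRep ℂ (Equiv.Perm Ω) (Set.powersetCard Ω r1))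
        (functionRep ℂ (Equiv.Perm Ω) (Set.powersetCard Ω r2)) where
  toFun T := ⟨T.1, fun g ↦ LinearMap.ext (T.2 g)⟩
  map_add' _ _ := rfl
  map_smul' _ _ := rfl
  invFun T := ⟨T.toLinearMap, T.isIntertwining⟩

/-- The space of `S(Ω)`-intertwining linear maps `(X_{r1} → ℂ) → (X_{r2} → ℂ)` has
dimension `min(r1, n-r1, r2, n-r2) + 1`. -/
theorem stmt_3 {Ω : Type*} [Fintype Ω] [DecidableEq Ω] (n r1 r2 : ℕ)
    (hn : Fintype.card Ω = n) (h1 : r1 ≤ n) (h2 : r2 ≤ n) :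
    Module.finrank ℂ (IntSp Ω r1 r2) = min (min r1 (n - r1)) (min r2 (n - r2)) + 1 :=
  (intSpEquivIntertwiningMap Ω r1 r2).finrank_eq.trans
    (stmt_3_general ℂ n r1 r2 (Nat.card_eq_fintype_card.trans hn) h1 h2)
end
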